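/- Let p be a prime and G a finite abelian group of order coprime to p. Then every finitely generated ℤ_p[G]-module M is isomorphic to a finite direct sum ⊕_{i=1}^{t} ℤ_p[G]/I_i for some ideals I_1 ⊆ I_2 ⊆ ⋯ ⊆ I_t of ℤ_p[G]. -/

import Mathlib

theorem aux_dvr (A M : Type) [CommRing A] [IsDomain A] [IsDiscreteValuationRing A]
    [AddCommGroup M] [Module A M] [Module.Finite A M] :
    ∃ (t : ℕ) (J : Fin t → Ideal A), Monotone J ∧ Nonempty (M ≃ₗ[A] ∀ i, A ⧸ J i) := by
  classical
  obtain ⟨n, ι, _, q, hq, e, ⟨f⟩⟩ := Module.equiv_free_prod_directSum (R := A) (M := M)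
  let K : Fin n ⊕ ι → Ideal A := Sum.elim (fun _ => ⊥) (fun i => Ideal.span {q i ^ e i})
  let c := Fintype.equivFin (Fin n ⊕ ι)
  let K' : Fin (Fintype.card (Fin n ⊕ ι)) → ENatᵒᵈ :=
    fun i => IsDiscreteValuationRing.idealOrderIsoENat A (K (c.symm i))
  let σ := Tuple.sort K'
  refine ⟨_, fun i => K (c.symm (σ i)), ?_, ⟨?_⟩⟩
  · intro i j hij
    exact (IsDiscreteValuationRing.idealOrderIsoENat A).le_iff_le.1 (Tuple.monotone_sort K' hij)
  · refine f ≪≫ₗ ?_ ≪≫ₗ (LinearEquiv.piCongrLeft A (fun i => A ⧸ K i) (σ.trans c.symm)).symm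
    refine ?_ ≪≫ₗ (LinearEquiv.sumPiEquivProdPi A (Fin n) ι (fun i => A ⧸ K i)).symm
    refine LinearEquiv.prodCongr ?_ ?_
    · exact Finsupp.linearEquivFunOnFinite A A (Fin n) ≪≫ₗ
        LinearEquiv.piCongrRight (fun i => (Submodule.quotEquivOfEqBot (⊥ : Ideal A) rfl).symm)
    · exact DirectSum.linearEquivFunOnFintype A ι (fun i => A ⧸ Ideal.span {q i ^ e i})

theorem aux_fin (R : Type) [CommRing R] (I : ℕ → Ideal R) (t : ℕ) (h : ∀ i, t ≤ i → I i = ⊤) :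
    Nonempty ((∀ i, R ⧸ I i) ≃ₗ[R] ∀ i : Fin t, R ⧸ I i) := by
  refine ⟨LinearEquiv.ofBijective
    (LinearMap.pi (fun i : Fin t => LinearMap.proj (φ := fun i => R ⧸ I i) i.val)) ⟨?_, ?_⟩⟩
  · intro a b hab
    funext i
    by_cases hi : i < t
    · exact congrFun hab ⟨i, hi⟩
    · have : Subsingleton (R ⧸ I i) := Ideal.Quotient.subsingleton_iff.2 (h i (not_lt.1 hi))
      exact Subsingleton.elim _ _
  · intro b
    refine ⟨fun i => if hi : i < t then b ⟨i, hi⟩ else 0, ?_⟩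
    funext i
    simp

theorem aux_crt (R : Type) [CommRing R] (I J : Ideal R) (h : IsCoprime I J) :
    Nonempty (((R ⧸ I) × (R ⧸ J)) ≃ₗ[R] R ⧸ (I ⊓ J)) := by
  have hs : Function.Surjective ((I.mkQ).prod J.mkQ) := by
    rintro ⟨a, b⟩
    obtain ⟨a, rfl⟩ := Submodule.mkQ_surjective _ a
    obtain ⟨b, rfl⟩ := Submodule.mkQ_surjective _ b
    obtain ⟨u, hu, v, hv, huv⟩ := Ideal.isCoprime_iff_exists.1 h
    refine ⟨v * a + u * b, ?_⟩
    refine Prod.ext ?_ ?_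
    · refine (Submodule.Quotient.eq _).2 ?_
      have : v * a + u * b - a = u * (b - a) := by linear_combination a * huv
      rw [this]; exact I.mul_mem_right _ hu
    · refine (Submodule.Quotient.eq _).2 ?_
      have : v * a + u * b - b = v * (a - b) := by linear_combination b * huv
      rw [this]; exact J.mul_mem_right _ hv
  have hk : LinearMap.ker ((I.mkQ).prod J.mkQ) = I ⊓ J := by
    rw [LinearMap.ker_prod, Submodule.ker_mkQ, Submodule.ker_mkQ]
  exact ⟨((Submodule.quotEquivOfEq _ _ hk).symm ≪≫ₗ
    LinearMap.quotKerEquivOfSurjective _ hs).symm⟩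

def ChainDec (R M : Type) [CommRing R] [AddCommGroup M] [Module R M] (e : R) : Prop :=
  ∃ (t : ℕ) (I : ℕ → Ideal R), Monotone I ∧ (∀ i, t ≤ i → I i = ⊤) ∧ (∀ i, 1 - e ∈ I i) ∧
    Nonempty (M ≃ₗ[R] ∀ i, R ⧸ I i)

theorem aux_glue (R M N L : Type) [CommRing R] [AddCommGroup M] [Module R M]
    [AddCommGroup N] [Module R N] [AddCommGroup L] [Module R L] (f g : R) (hfg : f * g = 0)
    (a : L ≃ₗ[R] M × N) (hM : ChainDec R M f) (hN : ChainDec R N g) :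
    ChainDec R L (f + g) := by
  obtain ⟨t, I, hI, hIt, hIf, ⟨φ⟩⟩ := hM
  obtain ⟨s, J, hJ, hJs, hJg, ⟨ψ⟩⟩ := hN
  have hc : ∀ i, IsCoprime (I i) (J i) := fun i => Ideal.isCoprime_iff_exists.2
    ⟨1 - f, hIf i, f, by
      have : f = f * (1 - g) := by linear_combination hfg
      rw [this]; exact (J i).mul_mem_left _ (hJg i), by ring⟩
  refine ⟨max t s, fun i => I i ⊓ J i, fun i j h => inf_le_inf (hI h) (hJ h), ?_, ?_, ⟨?_⟩⟩
  · intro i hi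
    simp [hIt i ((le_max_left _ _).trans hi), hJs i ((le_max_right _ _).trans hi)]
  · intro i
    refine ⟨?_, ?_⟩
    · have : 1 - (f + g) = (1 - g) * (1 - f) := by linear_combination -hfg
      rw [this]; exact (I i).mul_mem_left _ (hIf i)
    · have : 1 - (f + g) = (1 - f) * (1 - g) := by linear_combination -hfg
      rw [this]; exact (J i).mul_mem_left _ (hJg i)
  · refine a ≪≫ₗ φ.prodCongr ψ ≪≫ₗ ?_ ≪≫ₗ
      LinearEquiv.piCongrRight (fun i => (aux_crt R (I i) (J i) (hc i)).some)
    exact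
      { toFun := fun x i => (x.1 i, x.2 i)
        invFun := fun y => (fun i => (y i).1, fun i => (y i).2)
        map_add' := fun _ _ => rfl
        map_smul' := fun _ _ => rfl
        left_inv := fun _ => rfl
        right_inv := fun _ => rfl }

theorem aux_local (A : Type) [CommRing A] [Nontrivial A] [IsNoetherianRing A] (q : A)
    (hreg : ∀ x, q * x = 0 → x = 0) (hunit : ∀ x, IsUnit x ∨ q ∣ x) (hq : ¬ IsUnit q) :
    ∃ _ : IsDomain A, IsDiscreteValuationRing A := by
  have hpow : ∀ n x, q ^ n * x = 0 → x = 0 := by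
    intro n
    induction n with
    | zero => intro x hx; simpa using hx
    | succ n ih => intro x hx; exact ih x (hreg _ (by rw [← hx]; ring))
  have hnu : ∀ x, q ∣ x → ¬ IsUnit x := fun x h hx => hq (isUnit_of_dvd_unit h hx)
  have : IsLocalRing A := IsLocalRing.of_nonunits_add (by
    intro a b ha hb
    exact hnu _ (dvd_add ((hunit a).resolve_left ha) ((hunit b).resolve_left hb)))
  have hfac : ∀ x : A, x ≠ 0 → ∃ n : ℕ, ∃ u : A, IsUnit u ∧ x = q ^ n * u := by
    intro x hx
    by_contra hcon
    push Not at hcon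
    have hall : ∀ n : ℕ, q ^ n ∣ x := by
      intro n
      induction n with
      | zero => simp
      | succ n ih =>
        obtain ⟨y, hy⟩ := ih
        rcases hunit y with h | ⟨z, hz⟩
        · exact absurd hy (hcon n y h)
        · exact ⟨z, by rw [hy, hz]; ring⟩
    have hb := Ideal.iInf_pow_eq_bot_of_isLocalRing (Ideal.span {q})
      (by rw [Ne, Ideal.span_singleton_eq_top]; exact hq)
    apply hx
    rw [← Ideal.mem_bot, ← hb, Ideal.mem_iInf]
    intro n
    rw [Ideal.span_singleton_pow, Ideal.mem_span_singleton]
    exact hall n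
  have hd : IsDomain A := by
    have : NoZeroDivisors A := ⟨by
      intro a b hab
      by_contra hcon
      push Not at hcon
      obtain ⟨n, u, hu, rfl⟩ := hfac a hcon.1
      obtain ⟨m, v, hv, rfl⟩ := hfac b hcon.2
      have := hpow (n + m) (u * v) (by rw [← hab]; ring)
      exact (hu.mul hv).ne_zero this⟩
    exact NoZeroDivisors.to_isDomain A
  refine ⟨hd, ?_⟩
  have hq0 : q ≠ 0 := fun h => one_ne_zero (hreg 1 (by simp [h]))
  have hm : IsLocalRing.maximalIdeal A = Ideal.span {q} := by
    ext x
    rw [IsLocalRing.mem_maximalIdeal, Ideal.mem_span_singleton]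
    exact ⟨fun h => (hunit x).resolve_left h, hnu x⟩
  have hirr : Irreducible q := IsDiscreteValuationRing.irreducible_of_span_eq_maximalIdeal q hq0 hm
  apply IsDiscreteValuationRing.ofHasUnitMulPowIrreducibleFactorization
  refine ⟨q, hirr, ?_⟩
  intro x hx
  obtain ⟨n, u, hu, rfl⟩ := hfac x hx
  exact ⟨n, associated_mul_unit_right _ _ hu⟩

theorem aux_base (R M : Type) [CommRing R] [AddCommGroup M] [Module R M] [Module.Finite R M]
    (e : R) (hM : ∀ m : M, e • m = m)
    (hd : ∃ _ : IsDomain (R ⧸ Ideal.span {1 - e}),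
      IsDiscreteValuationRing (R ⧸ Ideal.span {1 - e})) :
    ChainDec R M e := by
  obtain ⟨_, _⟩ := hd
  have hT : Module.IsTorsionBySet R M (Ideal.span {1 - e} : Ideal R) := by
    rw [Module.isTorsionBySet_span_singleton_iff]
    intro m
    rw [sub_smul, hM, one_smul, sub_self]
  letI : Module (R ⧸ Ideal.span {1 - e}) M := hT.module
  haveI : IsScalarTower R (R ⧸ Ideal.span {1 - e}) M := hT.isScalarTower
  haveI : Module.Finite (R ⧸ Ideal.span {1 - e}) M := Module.Finite.of_restrictScalars_finite R _ M
  obtain ⟨t, J, hJ, ⟨φ⟩⟩ := aux_dvr (R ⧸ Ideal.span {1 - e}) M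
  have hcm : ∀ i, Nonempty (((R ⧸ Ideal.span {1 - e}) ⧸ J i) ≃ₗ[R]
      R ⧸ (J i).comap (Ideal.Quotient.mk (Ideal.span {1 - e}))) := by
    intro i
    let F : R →ₗ[R] ((R ⧸ Ideal.span {1 - e}) ⧸ J i) :=
      ((J i).mkQ.restrictScalars R).comp (Ideal.span {1 - e} : Ideal R).mkQ
    have hF : Function.Surjective F :=
      (Submodule.mkQ_surjective (J i)).comp (Submodule.mkQ_surjective _)
    have hk : LinearMap.ker F = (J i).comap (Ideal.Quotient.mk (Ideal.span {1 - e})) := by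
      ext x
      rw [LinearMap.mem_ker, Ideal.mem_comap]
      exact Submodule.Quotient.mk_eq_zero (J i)
    exact ⟨((Submodule.quotEquivOfEq _ _ hk).symm ≪≫ₗ
      LinearMap.quotKerEquivOfSurjective _ hF).symm⟩
  let I : ℕ → Ideal R := fun i =>
    if h : i < t then (J ⟨i, h⟩).comap (Ideal.Quotient.mk (Ideal.span {1 - e})) else ⊤
  have hIlt : ∀ i : Fin t, I i = (J i).comap (Ideal.Quotient.mk (Ideal.span {1 - e})) := by
    intro i; simp [I]
  have hItop : ∀ i, t ≤ i → I i = ⊤ := by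
    intro i hi; simp [I, not_lt.2 hi]
  refine ⟨t, I, ?_, hItop, ?_, ⟨?_⟩⟩
  · intro i j hij
    by_cases hj : j < t
    · rw [hIlt ⟨i, hij.trans_lt hj⟩, hIlt ⟨j, hj⟩]
      exact Ideal.comap_mono (hJ hij)
    · rw [hItop j (not_lt.1 hj)]; exact le_top
  · intro i
    by_cases hi : i < t
    · rw [hIlt ⟨i, hi⟩, Ideal.mem_comap,
        Ideal.Quotient.eq_zero_iff_mem.2 (Ideal.mem_span_singleton_self _)]
      exact zero_mem _
    · rw [hItop i (not_lt.1 hi)]; trivial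
  · exact φ.restrictScalars R ≪≫ₗ
      LinearEquiv.piCongrRight (fun i => (hcm i).some ≪≫ₗ
        Submodule.quotEquivOfEq _ _ (hIlt i).symm) ≪≫ₗ (aux_fin R I t hItop).some.symm

theorem aux_prim (R : Type) [CommRing R] [IsNoetherianRing R] (q : R)
    (hreg : ∀ x, q * x = 0 → x = 0) (hjac : ∀ y, IsUnit (q * y + 1))
    (hlift : ∀ x, q ∣ x * x - x → ∃ y, y * y = y ∧ q ∣ y - x)
    (n : ℕ) (hn : 1 ≤ n) (hpow : ∀ x, q ∣ x ^ (n + 1) - x)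
    (e : R) (he : e * e = e) (he0 : e ≠ 0)
    (hprim : ∀ f, f * f = f → f * e = f → f = 0 ∨ f = e) :
    ∃ _ : IsDomain (R ⧸ Ideal.span {1 - e}),
      IsDiscreteValuationRing (R ⧸ Ideal.span {1 - e}) := by
  have hmem : ∀ x, Ideal.Quotient.mk (Ideal.span {1 - e}) x = 0 ↔ e * x = 0 := by
    intro x
    rw [Ideal.Quotient.eq_zero_iff_mem, Ideal.mem_span_singleton]
    constructor
    · rintro ⟨y, rfl⟩
      linear_combination -y * he
    · intro h
      exact ⟨x, by linear_combination h⟩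
  have he1 : Ideal.Quotient.mk (Ideal.span {1 - e}) e = 1 := by
    rw [← map_one (Ideal.Quotient.mk (Ideal.span {1 - e})), ← sub_eq_zero, ← map_sub, hmem]
    linear_combination he
  have : Nontrivial (R ⧸ Ideal.span {1 - e}) := by
    refine ⟨1, 0, fun h => he0 ?_⟩
    rw [← map_one (Ideal.Quotient.mk (Ideal.span {1 - e})), hmem] at h
    simpa using h
  refine aux_local _ (Ideal.Quotient.mk (Ideal.span {1 - e}) q) ?_ ?_ ?_
  · intro x hx
    obtain ⟨x, rfl⟩ := Ideal.Quotient.mk_surjective x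
    rw [← map_mul, hmem] at hx
    rw [hmem]
    exact hreg _ (by linear_combination hx)
  · intro x
    obtain ⟨x, rfl⟩ := Ideal.Quotient.mk_surjective x
    obtain ⟨m, rfl⟩ : ∃ m, n = m + 1 := ⟨n - 1, by omega⟩
    obtain ⟨y, hy, z, hz⟩ := hlift (x ^ (m + 1)) (by
      obtain ⟨w, hw⟩ := hpow x
      exact ⟨x ^ m * w, by linear_combination x ^ m * hw⟩)
    rcases hprim (y * e) (by linear_combination e * e * hy + y * he) (by linear_combination y * he)
      with h | h
    · right
      obtain ⟨w, hw⟩ := hpow x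
      refine ⟨Ideal.Quotient.mk _ (-(z * x) - w), ?_⟩
      rw [← map_mul, ← sub_eq_zero, ← map_sub, hmem]
      linear_combination -e * hw - e * x * hz + x * h
    · left
      have h1 : Ideal.Quotient.mk (Ideal.span {1 - e}) (x ^ (m + 1)) =
          Ideal.Quotient.mk (Ideal.span {1 - e}) (q * (-z) + 1) := by
        rw [← sub_eq_zero, ← map_sub, hmem]
        linear_combination -e * hz + h
      have h2 := (hjac (-z)).map (Ideal.Quotient.mk (Ideal.span {1 - e}))
      rw [← h1, map_pow] at h2
      exact (isUnit_pow_iff (by omega)).1 h2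
  · intro h
    obtain ⟨w, hw⟩ := isUnit_iff_exists_inv.1 h
    obtain ⟨w, rfl⟩ := Ideal.Quotient.mk_surjective w
    rw [← map_mul, ← map_one (Ideal.Quotient.mk (Ideal.span {1 - e})), ← sub_eq_zero, ← map_sub,
      hmem] at hw
    have hu := hjac (-w)
    apply he0
    have : (q * -w + 1) * e = 0 := by linear_combination -hw
    exact (hu.mul_right_eq_zero).1 this

theorem aux_main (R : Type) [CommRing R] [IsNoetherianRing R] (q : R)
    (hreg : ∀ x, q * x = 0 → x = 0) (hjac : ∀ y, IsUnit (q * y + 1))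
    (hlift : ∀ x, q ∣ x * x - x → ∃ y, y * y = y ∧ q ∣ y - x)
    (n : ℕ) (hn : 1 ≤ n) (hpow : ∀ x, q ∣ x ^ (n + 1) - x) :
    ∀ (K : Ideal R) (e : R), K = Ideal.span {1 - e} → e * e = e →
      ∀ (M : Type) [AddCommGroup M] [Module R M] [Module.Finite R M],
      (∀ m : M, e • m = m) → ChainDec R M e := by
  intro K
  induction K using WellFoundedGT.induction with
  | ind K ih =>
  intro e hK he M _ _ _ hM
  by_cases he0 : e = 0
  · have hs : Subsingleton M := ⟨fun a b => by rw [← hM a, ← hM b, he0, zero_smul, zero_smul]⟩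
    have hq : ∀ i : ℕ, Subsingleton (R ⧸ (⊤ : Ideal R)) :=
      fun i => Ideal.Quotient.subsingleton_iff.2 rfl
    exact ⟨0, fun _ => ⊤, fun _ _ _ => le_rfl, fun _ _ => rfl, fun _ => trivial,
      ⟨{ (0 : M →ₗ[R] ∀ _ : ℕ, R ⧸ (⊤ : Ideal R)) with
          invFun := 0
          left_inv := fun _ => Subsingleton.elim _ _
          right_inv := fun _ => Subsingleton.elim _ _ }⟩⟩
  by_cases hprim : ∀ f, f * f = f → f * e = f → f = 0 ∨ f = e
  · exact aux_base R M e hM (aux_prim R q hreg hjac hlift n hn hpow e he he0 hprim)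
  push Not at hprim
  obtain ⟨f, hf, hfe, hf0, hfe'⟩ := hprim
  have key : ∀ f, f * f = f → f * e = f → f ≠ e → K < Ideal.span {1 - f} := by
    intro f hf hfe hfe'
    rw [hK]
    refine lt_of_le_of_ne ?_ ?_
    · rw [Ideal.span_singleton_le_span_singleton]
      exact ⟨1 - e, by linear_combination -hfe⟩
    · intro h
      have : (1 - f) ∈ Ideal.span {1 - e} := by rw [h]; exact Ideal.mem_span_singleton_self _
      obtain ⟨w, hw⟩ := Ideal.mem_span_singleton.1 this
      apply hfe'
      linear_combination -e * hw - hfe + w * he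
  have hg : (e - f) * (e - f) = e - f := by linear_combination he - 2 * hfe + hf
  have hfg : f * (e - f) = 0 := by linear_combination hfe - hf
  have hk1 := key f hf hfe hfe'
  have hk2 := key (e - f) hg (by linear_combination he - hfe) (by
    intro h; apply hf0; linear_combination -h)
  let a : M →ₗ[R] M := LinearMap.lsmul R M f
  let b : M →ₗ[R] M := LinearMap.lsmul R M (e - f)
  have hA := ih _ hk1 f rfl hf (LinearMap.range a) (by
    rintro ⟨_, m, rfl⟩
    ext
    change f • (f • m) = f • m
    rw [smul_smul, hf])
  have hB := ih _ hk2 (e - f) rfl hg (LinearMap.range b) (by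
    rintro ⟨_, m, rfl⟩
    ext
    change (e - f) • ((e - f) • m) = (e - f) • m
    rw [smul_smul, hg])
  have hc : IsCompl (LinearMap.range a) (LinearMap.range b) := by
    constructor
    · rw [Submodule.disjoint_def]
      rintro _ ⟨m, rfl⟩ ⟨m', hm'⟩
      have h1 : f • a m = a m := by
        change f • (f • m) = f • m
        rw [smul_smul, hf]
      rw [← h1, ← hm']
      change f • ((e - f) • m') = 0
      rw [smul_smul, hfg, zero_smul]
    · rw [codisjoint_iff, eq_top_iff]
      intro m _
      refine Submodule.mem_sup.2 ⟨a m, ⟨m, rfl⟩, b m, ⟨m, rfl⟩, ?_⟩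
      change f • m + (e - f) • m = m
      rw [← add_smul, add_sub_cancel, hM]
  have := aux_glue R _ _ M f (e - f) hfg (Submodule.prodEquivOfIsCompl _ _ hc).symm hA hB
  rwa [add_sub_cancel] at this

theorem aux_dvd (p : ℕ) [Fact p.Prime] (G : Type) [CommGroup G] [Fintype G] (n : ℕ)
    (x : MonoidAlgebra ℤ_[p] G) :
    (p : MonoidAlgebra ℤ_[p] G) ^ n ∣ x ↔ ∀ g, (p : ℤ_[p]) ^ n ∣ x.coeff g := by
  have hmul : ∀ y : MonoidAlgebra ℤ_[p] G,
      (p : MonoidAlgebra ℤ_[p] G) ^ n * y = ((p : ℤ_[p]) ^ n) • y := by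
    intro y
    rw [Algebra.smul_def, map_pow, map_natCast]
  constructor
  · rintro ⟨y, rfl⟩ g
    rw [hmul]
    exact ⟨y.coeff g, by simp⟩
  · intro h
    choose c hc using h
    refine ⟨MonoidAlgebra.ofCoeff (Finsupp.equivFunOnFinite.symm c), ?_⟩
    rw [hmul]
    ext g
    simp [hc]

theorem aux_smod (p : ℕ) [Fact p.Prime] (G : Type) [CommGroup G] [Fintype G] (n : ℕ)
    (x y : MonoidAlgebra ℤ_[p] G) :
    x ≡ y [SMOD ((Ideal.span {(p : MonoidAlgebra ℤ_[p] G)}) ^ n • ⊤ :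
      Submodule (MonoidAlgebra ℤ_[p] G) (MonoidAlgebra ℤ_[p] G))] ↔
    ∀ g, x.coeff g ≡ y.coeff g [SMOD ((IsLocalRing.maximalIdeal ℤ_[p]) ^ n • ⊤ :
      Submodule ℤ_[p] ℤ_[p])] := by
  simp only [← Ideal.one_eq_top, smul_eq_mul, mul_one, SModEq.sub_mem,
    PadicInt.maximalIdeal_eq_span_p, Ideal.span_singleton_pow, Ideal.mem_span_singleton]
  rw [aux_dvd]
  rfl

theorem aux_complete (p : ℕ) [Fact p.Prime] (G : Type) [CommGroup G] [Fintype G] :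
    IsAdicComplete (Ideal.span {(p : MonoidAlgebra ℤ_[p] G)}) (MonoidAlgebra ℤ_[p] G) where
  haus' := by
    intro x hx
    ext g
    refine IsHausdorff.haus (I := IsLocalRing.maximalIdeal ℤ_[p]) inferInstance _ ?_
    intro n
    exact (aux_smod p G n x 0).1 (hx n) g
  prec' := by
    intro f hf
    have : ∀ g, ∃ L : ℤ_[p], ∀ n, (f n).coeff g ≡ L
        [SMOD ((IsLocalRing.maximalIdeal ℤ_[p]) ^ n • ⊤ : Submodule ℤ_[p] ℤ_[p])] := by
      intro g
      refine IsPrecomplete.prec (I := IsLocalRing.maximalIdeal ℤ_[p]) inferInstance ?_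
      intro m n hmn
      exact (aux_smod p G m _ _).1 (hf hmn) g
    choose L hL using this
    refine ⟨MonoidAlgebra.ofCoeff (Finsupp.equivFunOnFinite.symm L), fun n => ?_⟩
    rw [aux_smod]
    intro g
    exact hL g n

theorem aux_frob (p : ℕ) [hp : Fact p.Prime] (G : Type) [CommGroup G] [Fintype G]
    (hG : ¬ p ∣ Fintype.card G) (x : MonoidAlgebra ℤ_[p] G) :
    (p : MonoidAlgebra ℤ_[p] G) ∣ x ^ (p ^ (Nat.totient (Fintype.card G))) - x := by
  have hcop : p ^ (Nat.totient (Fintype.card G)) ≡ 1 [MOD Fintype.card G] :=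
    Nat.ModEq.pow_totient ((Nat.Prime.coprime_iff_not_dvd hp.out).2 hG)
  generalize Nat.totient (Fintype.card G) = f at *
  induction x using MonoidAlgebra.induction_linear with
  | zero => rw [zero_pow (pow_pos hp.out.pos _).ne']; simp
  | add x y hx hy =>
    obtain ⟨r, hr⟩ := exists_add_pow_prime_pow_eq hp.out x y f
    rw [hr]
    obtain ⟨u, hu⟩ := hx
    obtain ⟨v, hv⟩ := hy
    exact ⟨u + v + x * y * r, by linear_combination hu + hv⟩
  | single g a =>
    have hg : g ^ (p ^ f) = g := by
      have : p ^ f ≡ 1 [MOD orderOf g] := hcop.of_dvd (orderOf_dvd_card)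
      simpa using (pow_eq_pow_iff_modEq (x := g)).2 this
    have ha : (p : ℤ_[p]) ∣ a ^ (p ^ f) - a := by
      rw [← Ideal.mem_span_singleton, ← PadicInt.maximalIdeal_eq_span_p, ← PadicInt.ker_toZMod,
        RingHom.mem_ker, map_sub, map_pow, ZMod.pow_card_pow, sub_self]
    rw [MonoidAlgebra.single_pow, hg]
    have := aux_dvd p G 1
      (MonoidAlgebra.single g (a ^ (p ^ f)) - MonoidAlgebra.single g a)
    rw [pow_one] at this
    rw [this]
    intro g'
    rw [pow_one, ← MonoidAlgebra.single_sub]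
    classical
    rw [MonoidAlgebra.coeff_single, Finsupp.single_apply]
    split_ifs
    · exact ha
    · exact dvd_zero _

theorem stmt8 (p : ℕ) [Fact p.Prime] (G : Type) [CommGroup G] [Fintype G]
    (hG : ¬ p ∣ Fintype.card G)
    (M : Type) [AddCommGroup M] [Module (MonoidAlgebra ℤ_[p] G) M]
    [Module.Finite (MonoidAlgebra ℤ_[p] G) M] :
    ∃ (t : ℕ) (I : Fin t → Ideal (MonoidAlgebra ℤ_[p] G)),
      (∀ i j : Fin t, i ≤ j → I i ≤ I j) ∧
      Nonempty (M ≃ₗ[MonoidAlgebra ℤ_[p] G] ∀ i : Fin t, MonoidAlgebra ℤ_[p] G ⧸ I i) := by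
  have hp : p.Prime := Fact.out
  have hcomp := aux_complete p G
  have hens : HenselianRing (MonoidAlgebra ℤ_[p] G)
    (Ideal.span {(p : MonoidAlgebra ℤ_[p] G)}) := inferInstance
  have hnoeth : IsNoetherianRing (MonoidAlgebra ℤ_[p] G) := by
    have : Module.Finite ℤ_[p] (MonoidAlgebra ℤ_[p] G) := inferInstance
    exact IsNoetherianRing.of_finite ℤ_[p] _
  have h2 : 2 ≤ p ^ (Nat.totient (Fintype.card G)) :=
    hp.two_le.trans (Nat.le_self_pow (Nat.totient_pos.2 Fintype.card_pos).ne' p)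
  obtain ⟨t, I, hI, hIt, -, ⟨φ⟩⟩ := aux_main (MonoidAlgebra ℤ_[p] G) (p : MonoidAlgebra ℤ_[p] G)
    (by
      intro x hx
      have hx' : (p : ℤ_[p]) • x = 0 := by
        rw [Algebra.smul_def, map_natCast]; exact hx
      ext g
      have := congrArg (fun y => MonoidAlgebra.coeff y g) hx'
      simpa [hp.ne_zero] using this)
    (fun y => Ideal.mem_jacobson_bot.1 (hens.jac (Ideal.mem_span_singleton_self _)) y)
    (by
      intro x hx
      obtain ⟨w, hw⟩ := hx
      obtain ⟨y, hy, hyx⟩ := hens.is_henselian (Polynomial.X ^ 2 - Polynomial.X)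
        (by monicity!) x (by
          rw [Ideal.mem_span_singleton]
          exact ⟨w, by simp; linear_combination hw⟩) (by
          refine isUnit_iff_exists_inv.2 ⟨Ideal.Quotient.mk _ (2 * x - 1), ?_⟩
          rw [← map_mul, ← map_one (Ideal.Quotient.mk _), ← sub_eq_zero, ← map_sub,
            Ideal.Quotient.eq_zero_iff_mem, Ideal.mem_span_singleton]
          exact ⟨4 * w, by simp [Polynomial.derivative_X_pow]; linear_combination 4 * hw⟩)
      refine ⟨y, ?_, Ideal.mem_span_singleton.1 hyx⟩
      have : y ^ 2 - y = 0 := by simpa [Polynomial.IsRoot] using hy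
      linear_combination this)
    (p ^ (Nat.totient (Fintype.card G)) - 1) (by omega)
    (by
      intro x
      rw [Nat.sub_add_cancel (by omega)]
      exact aux_frob p G hG x)
    _ 1 rfl (one_mul 1) M (fun m => one_smul _ m)
  exact ⟨t, fun i => I i, fun i j h => hI h, ⟨φ ≪≫ₗ (aux_fin _ I t hIt).some⟩⟩
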